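/- arXiv:1601.04908 — 2 statements merged into one kernel-verified Lean document; each statement's English description precedes it below -/
import Mathlib

section
/- Let A, B be positive semidefinite real n×n matrices and suppose k is the greatest element of the set {k ∈ ℝ | B - k•A is positive semidefinite}. Let ρ be a positive semidefinite real n×n matrix with trace 1 whose range (as a linear map via matrix-vector multiplication) is contained in the range of B. Then for every ε > 0 there exists δ > 0 such that, setting A' = A + δ•ρ, the set {k ∈ ℝ | B - k•A' is positive semidefinite} has a greatest element k', and |k - k'| < ε. -/
open Matrix

/-!
If `k • a ≤ b` and `e ≤ c • b` with `0 ≤ k`, then `k • (a + e) ≤ (1 + k * c) • b`. Used for the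
pairs `(a, e)` and `(a + e, -e)`, this traps the greatest strength of `a + e` between
`k / (1 + k * c)` and `k / (1 - k * c)` whenever `-c • b ≤ e ≤ c • b` and `k * c < 1`. For `δ • e`
the constant becomes `|δ| * c`, so both bounds tend to `k` as `δ → 0`. A Hermitian `ρ` whose range
lies in that of `B = Tᴴ * T` is such a perturbation: if `T * N * T = T`, then
`ρ = Tᴴ * (Nᴴ * ρ * N) * T`, and `Nᴴ * ρ * N` is at most a multiple of the identity.
-/

open Filter Set Topology

section OrderedModule

variable {E : Type*} [AddCommGroup E] [PartialOrder E] [Module ℝ E]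

/-- The strengths `k` at which `a` is a `k`-hyponym of `b`, in an arbitrary ordered real vector
space. For matrices with the Loewner order, `k • a ≤ b` unfolds to `(b - k • a).PosSemidef`. -/
def hyponymStrengths (a b : E) : Set ℝ :=
  {k | k • a ≤ b}

variable {a b e : E} {c k : ℝ}

lemma zero_mem_hyponymStrengths (hb : 0 ≤ b) : 0 ∈ hyponymStrengths a b :=
  (zero_smul ℝ a).trans_le hb

lemma isClosed_hyponymStrengths [TopologicalSpace E] [ContinuousSMul ℝ E] [ClosedIicTopology E] :
    IsClosed (hyponymStrengths a b) :=
  isClosed_Iic.preimage (continuous_id.smul continuous_const)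

variable [PosSMulMono ℝ E]

lemma smul_le_abs_mul_smul (he : e ≤ c • b) (hne : -e ≤ c • b) (δ : ℝ) :
    δ • e ≤ (|δ| * c) • b := by
  rw [mul_smul]
  rcases abs_choice δ with h | h
  · rw [h]
    exact smul_le_smul_of_nonneg_left he (h ▸ abs_nonneg δ)
  · rw [h, ← neg_smul_neg]
    exact smul_le_smul_of_nonneg_left hne (h ▸ abs_nonneg δ)

variable [IsOrderedAddMonoid E]

lemma div_mem_hyponymStrengths_add (hk : 0 ≤ k) (hc : 0 ≤ c) (hka : k ∈ hyponymStrengths a b)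
    (he : e ≤ c • b) : k / (1 + k * c) ∈ hyponymStrengths (a + e) b := by
  have hpos : 0 < 1 + k * c := by positivity
  calc (k / (1 + k * c)) • (a + e)
      = (1 + k * c)⁻¹ • (k • a + k • e) := by rw [div_eq_inv_mul, mul_smul, smul_add]
    _ ≤ (1 + k * c)⁻¹ • (b + k • c • b) :=
        smul_le_smul_of_nonneg_left (add_le_add hka (smul_le_smul_of_nonneg_left he hk))
          (inv_nonneg.2 hpos.le)
    _ = (1 + k * c)⁻¹ • (1 + k * c) • b := by rw [add_smul, one_smul, mul_smul]
    _ = b := inv_smul_smul₀ hpos.ne' b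

lemma le_div_of_mem_hyponymStrengths_add (hk : k ∈ upperBounds (hyponymStrengths a b))
    (hb : 0 ≤ b) (hc : 0 ≤ c) (hkc : k * c < 1) (hne : -e ≤ c • b) {m : ℝ}
    (hm : m ∈ hyponymStrengths (a + e) b) : m ≤ k / (1 - k * c) := by
  have hk₀ : 0 ≤ k := hk (zero_mem_hyponymStrengths hb)
  rcases le_total m 0 with hm₀ | hm₀
  · exact hm₀.trans (div_nonneg hk₀ (sub_nonneg.2 hkc.le))
  · have hmem : m / (1 + m * c) ∈ hyponymStrengths a b := by
      simpa using div_mem_hyponymStrengths_add hm₀ hc hm hne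
    have hle : m ≤ k * (1 + m * c) := (div_le_iff₀ (by positivity)).1 (hk hmem)
    rw [le_div_iff₀ (sub_pos.2 hkc)]
    linarith

variable [TopologicalSpace E] [ContinuousSMul ℝ E] [ClosedIicTopology E]

lemma exists_isGreatest_hyponymStrengths_add (hk : IsGreatest (hyponymStrengths a b) k)
    (hb : 0 ≤ b) (hc : 0 ≤ c) (hkc : k * c < 1) (he : e ≤ c • b) (hne : -e ≤ c • b) :
    ∃ k' ∈ Icc (k / (1 + k * c)) (k / (1 - k * c)),
      IsGreatest (hyponymStrengths (a + e) b) k' := by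
  have hmem : k / (1 + k * c) ∈ hyponymStrengths (a + e) b :=
    div_mem_hyponymStrengths_add (hk.2 (zero_mem_hyponymStrengths hb)) hc hk.1 he
  have hbound : ∀ m ∈ hyponymStrengths (a + e) b, m ≤ k / (1 - k * c) := fun _ =>
    le_div_of_mem_hyponymStrengths_add hk.2 hb hc hkc hne
  have hgreatest := isClosed_hyponymStrengths.isGreatest_csSup ⟨_, hmem⟩ ⟨_, hbound⟩
  exact ⟨_, ⟨hgreatest.2 hmem, hbound _ hgreatest.1⟩, hgreatest⟩

theorem eventually_exists_isGreatest_hyponymStrengths_add_smul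
    (hk : IsGreatest (hyponymStrengths a b) k) (hb : 0 ≤ b) (hc : 0 ≤ c) (he : e ≤ c • b)
    (hne : -e ≤ c • b) {ε : ℝ} (hε : 0 < ε) :
    ∀ᶠ δ in 𝓝 (0 : ℝ), ∃ k', IsGreatest (hyponymStrengths (a + δ • e) b) k' ∧ |k - k'| < ε := by
  have hsmall : Tendsto (fun δ : ℝ => k * (|δ| * c)) (𝓝 0) (𝓝 0) :=
    Continuous.tendsto' (by fun_prop) _ _ (by simp)
  have hlower : Tendsto (fun δ : ℝ => k / (1 + k * (|δ| * c))) (𝓝 0) (𝓝 k) := by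
    simpa only [add_zero, div_one, Pi.div_def] using
      tendsto_const_nhds.div (hsmall.const_add 1) (by norm_num)
  have hupper : Tendsto (fun δ : ℝ => k / (1 - k * (|δ| * c))) (𝓝 0) (𝓝 k) := by
    simpa only [sub_zero, div_one, Pi.div_def] using
      tendsto_const_nhds.div (hsmall.const_sub 1) (by norm_num)
  filter_upwards [hsmall.eventually_lt_const one_pos,
    hlower.eventually_const_lt (sub_lt_self k hε),
    hupper.eventually_lt_const (lt_add_of_pos_right k hε)] with δ hδ hlow hup
  obtain ⟨k', ⟨hk'low, hk'up⟩, hk'⟩ := exists_isGreatest_hyponymStrengths_add hk hb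
    (mul_nonneg (abs_nonneg δ) hc) hδ (smul_le_abs_mul_smul he hne δ)
    (by simpa using smul_le_abs_mul_smul he hne (-δ))
  exact ⟨k', hk', abs_sub_lt_iff.2 ⟨by linarith, by linarith⟩⟩

end OrderedModule

section Factorization

lemma exists_linearMap_comp_comp_self_eq {K V W : Type*} [DivisionRing K] [AddCommGroup V]
    [Module K V] [AddCommGroup W] [Module K W] (f : V →ₗ[K] W) :
    ∃ g : W →ₗ[K] V, f ∘ₗ g ∘ₗ f = f := by
  obtain ⟨s, hs⟩ := f.rangeRestrict.exists_rightInverse_of_surjective f.range_rangeRestrict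
  obtain ⟨g, hg⟩ := LinearMap.exists_extend s
  refine ⟨g, LinearMap.ext fun x => ?_⟩
  have hgs : g (f x) = s (f.rangeRestrict x) := LinearMap.congr_fun hg (f.rangeRestrict x)
  have hfs : f.rangeRestrict (s (f.rangeRestrict x)) = f.rangeRestrict x :=
    LinearMap.congr_fun hs (f.rangeRestrict x)
  rw [LinearMap.comp_apply, LinearMap.comp_apply, hgs]
  exact congrArg Subtype.val hfs

lemma exists_mul_mul_self_eq {K m n : Type*} [Field K] [Fintype m] [Fintype n]
    (M : Matrix m n K) : ∃ N : Matrix n m K, M * N * M = M := by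
  classical
  obtain ⟨g, hg⟩ := exists_linearMap_comp_comp_self_eq (toLin' M)
  refine ⟨LinearMap.toMatrix' g, toLin'.injective ?_⟩
  rw [Matrix.mul_assoc, toLin'_mul, toLin'_mul, toLin'_toMatrix', hg]

lemma exists_eq_mul_of_range_mulVecLin_le {R l m n : Type*} [CommSemiring R] [Fintype m]
    [Fintype n] {M : Matrix l n R} {N : Matrix l m R}
    (h : LinearMap.range M.mulVecLin ≤ LinearMap.range N.mulVecLin) :
    ∃ Y : Matrix m n R, M = N * Y := by
  classical
  have hcol (j : n) : ∃ y, N *ᵥ y = M.col j :=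
    h ⟨Pi.single j 1, M.mulVec_single_one j⟩
  choose y hy using hcol
  exact ⟨(of y)ᵀ, ext_col fun j => (hy j).symm⟩

end Factorization

section Loewner

open scoped ComplexOrder MatrixOrder

variable {n 𝕜 : Type*} [RCLike 𝕜]

lemma isClosed_setOf_posSemidef : IsClosed {M : Matrix n n 𝕜 | M.PosSemidef} := by
  simp only [PosSemidef, IsHermitian, Finsupp.sum, ofPred_and, ofPred_forall]
  exact (isClosed_eq (by fun_prop) (by fun_prop)).inter
    (isClosed_iInter fun x => isClosed_le (by fun_prop) (by fun_prop))

instance instClosedIicTopologyMatrix : ClosedIicTopology (Matrix n n 𝕜) where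
  isClosed_Iic _ := isClosed_setOf_posSemidef.preimage (continuous_const.sub continuous_id)

lemma exists_le_smul_one_of_isHermitian [Finite n] [DecidableEq n] {M : Matrix n n 𝕜}
    (hM : M.IsHermitian) : ∃ c : ℝ, M ≤ c • 1 := by
  have := Fintype.ofFinite n
  obtain ⟨c, hc⟩ := (finite_real_spectrum (A := M)).bddAbove
  refine ⟨c, ?_⟩
  rw [← Algebra.algebraMap_eq_smul_one]
  exact le_algebraMap_of_spectrum_le (fun r hr => hc hr) hM

variable [Fintype n]

lemma exists_le_smul_of_range_mulVecLin_le {B ρ : Matrix n n 𝕜} (hB : B.PosSemidef)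
    (hρ : ρ.IsHermitian) (h : LinearMap.range ρ.mulVecLin ≤ LinearMap.range B.mulVecLin) :
    ∃ c : ℝ, ρ ≤ c • B := by
  classical
  obtain ⟨T, rfl⟩ : ∃ T : Matrix n n 𝕜, B = Tᴴ * T :=
    CStarAlgebra.nonneg_iff_eq_star_mul_self.1 hB.nonneg
  obtain ⟨Y, hY⟩ := exists_eq_mul_of_range_mulVecLin_le h
  obtain ⟨N, hN⟩ := exists_mul_mul_self_eq T
  have hρNT : ρ * N * T = ρ := by
    have hρT : ρ = Yᴴ * Tᴴ * T := by
      rw [← hρ.eq, hY]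
      simp [mul_assoc]
    rw [hρT, mul_assoc _ T N, mul_assoc _ (T * N) T, hN]
  have hconj : ρ = Tᴴ * (Nᴴ * ρ * N) * T := by
    calc ρ = (ρ * N * T)ᴴ * N * T := by rw [hρNT, hρ.eq, hρNT]
      _ = Tᴴ * (Nᴴ * ρ * N) * T := by simp [hρ.eq, mul_assoc]
  obtain ⟨c, hc⟩ := exists_le_smul_one_of_isHermitian (isHermitian_conjTranspose_mul_mul N hρ)
  refine ⟨c, ?_⟩
  calc ρ = Tᴴ * (Nᴴ * ρ * N) * T := hconj
    _ ≤ Tᴴ * (c • 1) * T := star_left_conjugate_le_conjugate hc T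
    _ = c • (Tᴴ * T) := by simp

lemma exists_le_smul_and_neg_le_smul_of_range_mulVecLin_le {B ρ : Matrix n n 𝕜}
    (hB : B.PosSemidef) (hρ : ρ.IsHermitian)
    (h : LinearMap.range ρ.mulVecLin ≤ LinearMap.range B.mulVecLin) :
    ∃ c : ℝ, 0 ≤ c ∧ ρ ≤ c • B ∧ -ρ ≤ c • B := by
  have hneg : LinearMap.range (-ρ).mulVecLin ≤ LinearMap.range B.mulVecLin := by
    rwa [show (-ρ).mulVecLin = -ρ.mulVecLin from LinearMap.ext ρ.neg_mulVec, LinearMap.range_neg]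
  obtain ⟨c, hc⟩ := exists_le_smul_of_range_mulVecLin_le hB hρ h
  obtain ⟨d, hd⟩ := exists_le_smul_of_range_mulVecLin_le hB hρ.neg hneg
  have hmono {s t : ℝ} (hst : s ≤ t) : s • B ≤ t • B := smul_le_smul_of_nonneg_right hst hB.nonneg
  exact ⟨max 0 (max c d), le_max_left _ _, hc.trans (hmono (by simp)), hd.trans (hmono (by simp))⟩

theorem kmax_continuity_general {A B ρ : Matrix n n 𝕜} (hB : B.PosSemidef) {k : ℝ}
    (hk : IsGreatest {k : ℝ | (B - k • A).PosSemidef} k) (hρ : ρ.IsHermitian)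
    (hsupp : LinearMap.range ρ.mulVecLin ≤ LinearMap.range B.mulVecLin) {ε : ℝ} (hε : 0 < ε) :
    ∀ᶠ δ in 𝓝 (0 : ℝ), ∃ k' : ℝ,
      IsGreatest {m : ℝ | (B - m • (A + δ • ρ)).PosSemidef} k' ∧ |k - k'| < ε := by
  obtain ⟨c, hc, hρB, hnegρB⟩ := exists_le_smul_and_neg_le_smul_of_range_mulVecLin_le hB hρ hsupp
  exact eventually_exists_isGreatest_hyponymStrengths_add_smul (a := A) (b := B)
    hk hB.nonneg hc hρB hnegρB hε

end Loewner

/-- Continuity of the entailment strength. If `k` is the greatest element of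
`{k | B - k • A is PSD}` and `ρ` is a density matrix whose range is contained in the range
of `B`, then for every `ε > 0` there is `δ > 0` such that, setting `A' = A + δ • ρ`, the
set `{m | B - m • A' is PSD}` has a greatest element `k'` with `|k - k'| < ε`. -/
theorem kmax_continuity {n : ℕ} (A B ρ : Matrix (Fin n) (Fin n) ℝ)
    (hA : A.PosSemidef) (hB : B.PosSemidef)
    (k : ℝ) (hk : IsGreatest {k : ℝ | (B - k • A).PosSemidef} k)
    (hρ : ρ.PosSemidef) (hρtr : ρ.trace = 1)
    (hsupp : LinearMap.range ρ.mulVecLin ≤ LinearMap.range B.mulVecLin) :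
    ∀ ε : ℝ, 0 < ε → ∃ δ : ℝ, 0 < δ ∧ ∃ k' : ℝ,
      IsGreatest {m : ℝ | (B - m • (A + δ • ρ)).PosSemidef} k' ∧ |k - k'| < ε := by
  intro ε hε
  have hev : ∀ᶠ δ in 𝓝[>] (0 : ℝ), _ :=
    nhdsWithin_le_nhds (kmax_continuity_general hB hk hρ.isHermitian hsupp hε)
  exact (eventually_mem_nhdsWithin.and hev).exists
end

section
/- Let ι be a finite index type, and for each i ∈ ι let m(i) be a finite index type. Let A, B assign to each i ∈ ι a real square matrix on m(i). Suppose each A(i) is positive semidefinite and each B(i) - A(i) is positive semidefinite (i.e. A(i) ⊑ B(i) in the Löwner order for each i). Define T(A) to be the real matrix indexed by Π i, m(i) with entries T(A)(x, y) = ∏_{i ∈ ι} A(i)(x(i), y(i)), and similarly T(B). Let φ be a linear map from real matrices on Π i, m(i) to real matrices on a finite index type S which sends positive semidefinite matrices to positive semidefinite matrices. Then φ(T(B)) - φ(T(A)) is positive semidefinite, i.e. φ(T(A)) ⊑ φ(T(B)). -/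
open Matrix

/-!
By the Schur product theorem, Hadamard multiplication by a positive semidefinite matrix is monotone
for the Löwner order. The Kronecker product of a family is a Hadamard product of submatrices: the
factor `A i` is pulled back along the `i`-th coordinate map of `∀ i, m i`, and pulling back along
a map preserves the Löwner order. So the Kronecker product is monotone on families of positive
semidefinite matrices, and a positive additive map preserves the resulting inequality.
-/

/-- The Hadamard (entrywise) product of the matrices `A i`, `i ∈ s`, all of the same shape. -/
def hadamardProd {ι m n R : Type*} [CommMonoid R] (s : Finset ι) (A : ι → Matrix m n R) :
    Matrix m n R :=
  of fun x y ↦ ∏ i ∈ s, A i x y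

/-- The Kronecker product of a finite family of matrices, with rows and columns indexed by dependent
functions instead of iterated pairs, so that no ordering of the family has to be chosen. -/
def piKronecker {ι R : Type*} {m n : ι → Type*} [Fintype ι] [CommMonoid R]
    (A : ∀ i, Matrix (m i) (n i) R) : Matrix (∀ i, m i) (∀ i, n i) R :=
  of fun x y ↦ ∏ i, A i (x i) (y i)

theorem hadamardProd_empty {ι m n R : Type*} [CommMonoid R] (A : ι → Matrix m n R) :
    hadamardProd ∅ A = of fun _ _ ↦ 1 :=
  rfl

theorem hadamardProd_cons {ι m n R : Type*} [CommMonoid R] {a : ι} {s : Finset ι} (ha : a ∉ s)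
    (A : ι → Matrix m n R) :
    hadamardProd (s.cons a ha) A = A a ⊙ hadamardProd s A := by
  ext x y
  exact Finset.prod_cons ha

theorem piKronecker_eq_hadamardProd {ι R : Type*} {m n : ι → Type*} [Fintype ι] [CommMonoid R]
    (A : ∀ i, Matrix (m i) (n i) R) :
    piKronecker A = hadamardProd Finset.univ fun i ↦ (A i).submatrix (· i) (· i) :=
  rfl

theorem hadamard_sub {m n R : Type*} [NonUnitalNonAssocRing R] (A B C : Matrix m n R) :
    A ⊙ (B - C) = A ⊙ B - A ⊙ C := by
  ext x y
  exact mul_sub _ _ _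

theorem posSemidef_of_one {n R : Type*} [Ring R] [PartialOrder R] [StarRing R]
    [StarOrderedRing R] : (of fun _ _ : n ↦ (1 : R)).PosSemidef :=
  (PosSemidef.one (n := Unit)).submatrix fun _ ↦ ()

section LoewnerOrder

open scoped ComplexOrder MatrixOrder

variable {𝕜 : Type*} [RCLike 𝕜]

theorem submatrix_le_submatrix {m n : Type*} {A B : Matrix n n 𝕜} (hAB : A ≤ B) (f : m → n) :
    A.submatrix f f ≤ B.submatrix f f :=
  PosSemidef.submatrix hAB f

variable {n : Type*}

theorem hadamard_le_hadamard_left {A B C : Matrix n n 𝕜} (hA : 0 ≤ A) (hBC : B ≤ C) :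
    A ⊙ B ≤ A ⊙ C := by
  rw [Matrix.le_iff, ← hadamard_sub]
  exact hA.posSemidef.hadamard hBC

theorem hadamard_le_hadamard {A B C D : Matrix n n 𝕜} (hAB : A ≤ B) (hCD : C ≤ D)
    (hA : 0 ≤ A) (hD : 0 ≤ D) :
    A ⊙ C ≤ B ⊙ D :=
  calc
    A ⊙ C ≤ A ⊙ D := hadamard_le_hadamard_left hA hCD
    _ = D ⊙ A := hadamard_comm A D
    _ ≤ D ⊙ B := hadamard_le_hadamard_left hD hAB
    _ = B ⊙ D := hadamard_comm D B

variable {ι : Type*}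

theorem hadamardProd_nonneg {s : Finset ι} {A : ι → Matrix n n 𝕜} (hA : ∀ i ∈ s, 0 ≤ A i) :
    0 ≤ hadamardProd s A := by
  induction s using Finset.cons_induction with
  | empty =>
    rw [hadamardProd_empty]
    exact posSemidef_of_one.nonneg
  | cons a s ha ih =>
    rw [Finset.forall_mem_cons] at hA
    rw [hadamardProd_cons]
    exact (hA.1.posSemidef.hadamard (ih hA.2).posSemidef).nonneg

theorem hadamardProd_le_hadamardProd {s : Finset ι} {A B : ι → Matrix n n 𝕜}
    (hA : ∀ i ∈ s, 0 ≤ A i) (hAB : ∀ i ∈ s, A i ≤ B i) :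
    hadamardProd s A ≤ hadamardProd s B := by
  induction s using Finset.cons_induction with
  | empty => simp only [hadamardProd_empty, le_refl]
  | cons a s ha ih =>
    have hB : ∀ i ∈ s.cons a ha, 0 ≤ B i := fun i hi ↦ (hA i hi).trans (hAB i hi)
    rw [Finset.forall_mem_cons] at hA hAB hB
    simp only [hadamardProd_cons]
    exact hadamard_le_hadamard hAB.1 (ih hA.2 hAB.2) hA.1 (hadamardProd_nonneg hB.2)

variable [Fintype ι] {m : ι → Type*} {A B : ∀ i, Matrix (m i) (m i) 𝕜}

theorem piKronecker_le_piKronecker (hA : ∀ i, 0 ≤ A i) (hAB : ∀ i, A i ≤ B i) :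
    piKronecker A ≤ piKronecker B := by
  simp only [piKronecker_eq_hadamardProd]
  exact hadamardProd_le_hadamardProd (fun i _ ↦ ((hA i).posSemidef.submatrix _).nonneg)
    fun i _ ↦ submatrix_le_submatrix (hAB i) _

theorem general_sentence_strict_entailment_general (hA : ∀ i, 0 ≤ A i) (hAB : ∀ i, A i ≤ B i)
    {E F : Type*} [AddCommGroup E] [PartialOrder E] [IsOrderedAddMonoid E]
    [FunLike F (Matrix (∀ i, m i) (∀ i, m i) 𝕜) E]
    [AddMonoidHomClass F (Matrix (∀ i, m i) (∀ i, m i) 𝕜) E]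
    (φ : F) (hφ : ∀ M, 0 ≤ M → 0 ≤ φ M) :
    φ (piKronecker A) ≤ φ (piKronecker B) :=
  (monotone_iff_map_nonneg φ).2 hφ (piKronecker_le_piKronecker hA hAB)

end LoewnerOrder

/-- Strict entailment in each component lifts to the sentence level: if
`A i ⊑ B i` in the Löwner order for each `i` (with each `A i` PSD), and `φ` is a
positivity-preserving linear map on the Kronecker product space, then
`φ(⊗ᵢ A i) ⊑ φ(⊗ᵢ B i)`. -/
theorem general_sentence_strict_entailment {ι : Type*} [Fintype ι] [DecidableEq ι]
    {m : ι → Type*} [∀ i, Fintype (m i)] [∀ i, DecidableEq (m i)]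
    (A B : ∀ i, Matrix (m i) (m i) ℝ)
    (hA : ∀ i, (A i).PosSemidef) (hBA : ∀ i, (B i - A i).PosSemidef)
    {S : Type*} [Fintype S] [DecidableEq S]
    (φ : Matrix (∀ i, m i) (∀ i, m i) ℝ →ₗ[ℝ] Matrix S S ℝ)
    (hφ : ∀ M : Matrix (∀ i, m i) (∀ i, m i) ℝ, M.PosSemidef → (φ M).PosSemidef) :
    (φ (Matrix.of fun x y => ∏ i, B i (x i) (y i)) -
      φ (Matrix.of fun x y => ∏ i, A i (x i) (y i))).PosSemidef := by
  open scoped MatrixOrder in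
  exact general_sentence_strict_entailment_general (fun i ↦ (hA i).nonneg) hBA φ
    fun M hM ↦ (hφ M hM.posSemidef).nonneg
end
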